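/- Let n ≥ 2 be even and fix a maximal isotropic subspace y of (ZMod 2)^{2n}. Then the number of maximal isotropic subspaces x with dim(x ∩ y) = n/2 equals binom(n, n/2)_2 · 2^{C(n/2+1, 2)}, where binom(n,m)_2 = ∏_{i=0}^{m−1} (2^{n−i} − 1)/(2^{i+1} − 1) is the Gaussian binomial coefficient and C(m,2) = m(m−1)/2. -/

import Mathlib

open Finset

abbrev F2 := ZMod 2
/-- `F2^{2n}`, split into the first and last `n` coordinates. -/
abbrev PV (n : ℕ) := (Fin n → F2) × (Fin n → F2)

/-- Symplectic product on `F2^{2n}`: zero iff `a₁·b₂ = a₂·b₁`. -/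
def symp {n : ℕ} (a b : PV n) : F2 :=
  (∑ i, a.1 i * b.2 i) + (∑ i, a.2 i * b.1 i)

/-- A subspace is isotropic if the symplectic product vanishes on it. -/
def IsIsotropic {n : ℕ} (S : Submodule F2 (PV n)) : Prop :=
  ∀ x ∈ S, ∀ y ∈ S, symp x y = 0

/-- `Lset n k` = `L^n_k`, the set of `k`-dimensional isotropic subspaces of `F2^{2n}`. -/
def Lset (n k : ℕ) : Set (Submodule F2 (PV n)) :=
  {S | IsIsotropic S ∧ Module.finrank F2 S = k}

/-- Integer lift of a vector over `F2`, with values in `{0,1} ⊆ ℤ`. -/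
def liftZ {n : ℕ} (v : Fin n → F2) : Fin n → ℤ := fun i => ((v i).val : ℤ)

def dotZ {n : ℕ} (a b : Fin n → ℤ) : ℤ := ∑ i, a i * b i

/-- The phase `i^{x̂₁·x̂₂} · i^{ŷ₁·ŷ₂} · i^{−((x+y)^^₁·(x+y)^^₂)} · (−1)^{x̂₂·ŷ₁}`. -/
noncomputable def phase {n : ℕ} (x y : PV n) : ℂ :=
  Complex.I ^ (dotZ (liftZ x.1) (liftZ x.2)) *
  Complex.I ^ (dotZ (liftZ y.1) (liftZ y.2)) *
  Complex.I ^ (-(dotZ (liftZ (x + y).1) (liftZ (x + y).2))) *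
  (-1 : ℂ) ^ (dotZ (liftZ x.2) (liftZ y.1))

/-- `w(x,y) ∈ {0,1} ⊆ F2`: zero iff the phase equals `1`. -/
noncomputable def wght {n : ℕ} (x y : PV n) : F2 :=
  if phase x y = 1 then 0 else 1

/-- An outcome of an isotropic subspace `S` is `f : S → F2` with
`f(x+y) = f(x)+f(y)+w(x,y)`. -/
def IsOutcome {n : ℕ} (S : Submodule F2 (PV n)) (f : S → F2) : Prop :=
  ∀ x y : S, f (x + y) = f x + f y + wght (x : PV n) (y : PV n)

/-- Two outcomes are consistent if they agree on the intersection of their domains. -/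
def ConsistentOn {n : ℕ} {S₁ S₂ : Submodule F2 (PV n)} (f₁ : S₁ → F2) (f₂ : S₂ → F2) : Prop :=
  ∀ v (h1 : v ∈ S₁) (h2 : v ∈ S₂), f₁ ⟨v, h1⟩ = f₂ ⟨v, h2⟩

/-- The Gaussian binomial coefficient `binom(n,m)_2 = ∏_{i=0}^{m−1} (2^{n−i}−1)/(2^{i+1}−1)`. -/
def gaussBinom (n m : ℕ) : ℚ :=
  ∏ i ∈ Finset.range m, ((2 : ℚ) ^ (n - i) - 1) / ((2 : ℚ) ^ (i + 1) - 1)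

/-!
Let `y` be a Lagrangian subspace of a symplectic space of dimension `2 n` over a field with `q`
elements. We count the `k`-tuples `t` that are linearly independent modulo `y` and span an isotropic
subspace `W` in two ways. Extending such a tuple one vector at a time, the next vector ranges over
`Wᗮ \ (y ⊔ W)`, which gives `∏ i < k, (q ^ (2 n - i) - q ^ n)` tuples. On the other hand
`W ⊔ (y ⊓ Wᗮ)` is the only Lagrangian subspace that contains `W` and meets `y` in codimension `k`,
and each Lagrangian `x` with `dim (x ⊓ y) = n - k` contains `∏ i < k, (q ^ n - q ^ (n - k + i))`
such tuples. The quotient of the two products is the number of these `x`.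
-/

open Module Submodule

lemma card_fin_tuples_eq_prod {α : Type*} [Finite α] {P : ∀ k, (Fin k → α) → Prop}
    {E : ∀ k, (Fin k → α) → Set α} {c : ℕ → ℕ} (hzero : ∀ t, P 0 t)
    (hsucc : ∀ k (t : Fin (k + 1) → α), P (k + 1) t ↔ P k (Fin.tail t) ∧ t 0 ∈ E k (Fin.tail t))
    (hcard : ∀ k t, P k t → (E k t).ncard = c k) (k : ℕ) :
    Nat.card {t // P k t} = ∏ i ∈ range k, c i := by
  induction k with
  | zero =>
    have : Unique {t // P 0 t} := ⟨⟨⟨Fin.elim0, hzero _⟩⟩, fun _ => Subsingleton.elim _ _⟩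
    simp
  | succ k ih =>
    let splitHead : {t // P (k + 1) t} ≃ Σ t : {t // P k t}, E k t :=
      { toFun t := ⟨⟨Fin.tail t.1, ((hsucc k t).1 t.2).1⟩, ⟨t.1 0, ((hsucc k t).1 t.2).2⟩⟩
        invFun s := ⟨Fin.cons s.2.1 s.1.1, (hsucc k _).2 ⟨s.1.2, s.2.2⟩⟩
        left_inv t := Subtype.ext (Fin.cons_self_tail t.1)
        right_inv _ := rfl }
    have := Fintype.ofFinite {t // P k t}
    have hfiber (t : {t // P k t}) : Nat.card (E k t) = c k := hcard k t t.2
    rw [Nat.card_congr splitHead, Nat.card_sigma, sum_congr rfl fun t _ => hfiber t, sum_const,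
      card_univ, ← Nat.card_eq_fintype_card, ih, prod_range_succ, smul_eq_mul]

section IndependentModulo

variable {K V ι : Type*} [DivisionRing K] [AddCommGroup V] [Module K V] {y U : Submodule K V}

lemma disjoint_span_of_linearIndependent_mkQ {t : ι → V}
    (ht : LinearIndependent K (y.mkQ ∘ t)) : Disjoint (span K (Set.range t)) y := by
  simpa using range_ker_disjoint ht

lemma finrank_span_of_linearIndependent_mkQ {k : ℕ} {t : Fin k → V}
    (ht : LinearIndependent K (y.mkQ ∘ t)) : finrank K (span K (Set.range t)) = k := by
  simpa using finrank_span_eq_card (LinearIndependent.of_comp _ ht)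

lemma linearIndependent_mkQ_finSucc {k : ℕ} {t : Fin (k + 1) → V} :
    LinearIndependent K (y.mkQ ∘ t) ↔ LinearIndependent K (y.mkQ ∘ Fin.tail t) ∧
      t 0 ∉ y ⊔ span K (Set.range (Fin.tail t)) := by
  have htail : Fin.tail (y.mkQ ∘ t) = y.mkQ ∘ Fin.tail t := rfl
  rw [linearIndependent_finSucc, htail, Set.range_comp, ← map_span, ← comap_map_mkQ, mem_comap,
    Function.comp_apply]

variable [FiniteDimensional K V]

lemma finrank_inf_sup_of_disjoint {W : Submodule K V} (hWU : W ≤ U) (hWy : Disjoint W y) :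
    finrank K ↥(U ⊓ (y ⊔ W)) = finrank K ↥(U ⊓ y) + finrank K W := by
  have hdisj : U ⊓ y ⊓ W = ⊥ := (hWy.symm.mono_left inf_le_right).eq_bot
  have hsum := finrank_sup_add_finrank_inf_eq (U ⊓ y) W
  rwa [hdisj, finrank_bot, add_zero, inf_sup_assoc_of_le _ hWU] at hsum

variable [Finite K]

lemma ncard_diff_sup_span {k : ℕ} {t : Fin k → V} (ht : LinearIndependent K (y.mkQ ∘ t))
    (htU : span K (Set.range t) ≤ U) :
    ((U : Set V) \ (y ⊔ span K (Set.range t) : Submodule K V)).ncard =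
      Nat.card K ^ finrank K U - Nat.card K ^ (finrank K ↥(U ⊓ y) + k) := by
  have : Finite V := Module.finite_of_finite K
  have hncard (S : Submodule K V) : (S : Set V).ncard = Nat.card K ^ finrank K S :=
    natCard_eq_pow_finrank (V := S)
  rw [← Set.sdiff_self_inter, Set.ncard_sdiff Set.inter_subset_left, ← coe_inf, hncard, hncard,
    finrank_inf_sup_of_disjoint htU (disjoint_span_of_linearIndependent_mkQ ht),
    finrank_span_of_linearIndependent_mkQ ht]

lemma card_linearIndependent_mkQ_mem (y U : Submodule K V) (k : ℕ) :
    Nat.card {t : Fin k → V // LinearIndependent K (y.mkQ ∘ t) ∧ ∀ i, t i ∈ U} =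
      ∏ i ∈ range k, (Nat.card K ^ finrank K U - Nat.card K ^ (finrank K ↥(U ⊓ y) + i)) := by
  have : Finite V := Module.finite_of_finite K
  refine card_fin_tuples_eq_prod
    (P := fun k (t : Fin k → V) => LinearIndependent K (y.mkQ ∘ t) ∧ ∀ i, t i ∈ U)
    (E := fun _ t => U \ (y ⊔ span K (Set.range t) : Submodule K V))
    (fun _ => ⟨linearIndependent_empty_type, fun i => i.elim0⟩) (fun k t => ?_)
    (fun k t ht => ncard_diff_sup_span ht.1 (span_le.2 (Set.range_subset_iff.2 ht.2))) k
  rw [linearIndependent_mkQ_finSucc, Fin.forall_fin_succ, Set.mem_sdiff, SetLike.mem_coe,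
    SetLike.mem_coe]
  simp only [Fin.tail]
  tauto

end IndependentModulo

section Orthogonal

variable {R M ι : Type*} [CommRing R] [AddCommGroup M] [Module R M] {B : LinearMap.BilinForm R M}

lemma orthogonal_sup (B : LinearMap.BilinForm R M) (U W : Submodule R M) :
    B.orthogonal (U ⊔ W) = B.orthogonal U ⊓ B.orthogonal W := by
  refine le_antisymm (le_inf (LinearMap.BilinForm.orthogonal_le le_sup_left)
    (LinearMap.BilinForm.orthogonal_le le_sup_right)) fun v ⟨hU, hW⟩ a ha => ?_
  obtain ⟨u, hu, w, hw, rfl⟩ := mem_sup.1 ha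
  simp [hU u hu, hW w hw]

lemma mem_orthogonal_span_range {t : ι → M} {v : M} :
    v ∈ B.orthogonal (span R (Set.range t)) ↔ ∀ i, B (t i) v = 0 := by
  refine ⟨fun h i => h _ (subset_span ⟨i, rfl⟩), fun h => ?_⟩
  have hker : span R (Set.range t) ≤ LinearMap.ker (B.flip v) :=
    span_le.2 (Set.range_subset_iff.2 h)
  exact fun a ha => hker ha

lemma span_range_le_orthogonal_self_iff {t : ι → M} :
    span R (Set.range t) ≤ B.orthogonal (span R (Set.range t)) ↔ ∀ i j, B (t i) (t j) = 0 := by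
  simp only [span_le, Set.range_subset_iff, SetLike.mem_coe, mem_orthogonal_span_range]
  exact forall_comm

end Orthogonal

/-- A Lagrangian subspace of a reflexive bilinear form, encoded as a subspace that is its own
orthogonal complement. -/
def IsLagrangian {R M : Type*} [CommRing R] [AddCommGroup M] [Module R M]
    (B : LinearMap.BilinForm R M) (x : Submodule R M) : Prop :=
  B.orthogonal x = x

/-- For an isotropic subspace `W` and a Lagrangian subspace `y`, the Lagrangian subspace containing
`W` that has the largest intersection with `y`. -/
def lagrangianCompletion {R M : Type*} [CommRing R] [AddCommGroup M] [Module R M]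
    (B : LinearMap.BilinForm R M) (y W : Submodule R M) : Submodule R M :=
  W ⊔ (y ⊓ B.orthogonal W)

section Lagrangian

variable {R M : Type*} [CommRing R] [AddCommGroup M] [Module R M] {B : LinearMap.BilinForm R M}

lemma IsLagrangian.inf_orthogonal {y : Submodule R M} (hy : IsLagrangian B y)
    (W : Submodule R M) : y ⊓ B.orthogonal W = B.orthogonal (y ⊔ W) := by
  rw [orthogonal_sup, hy]

lemma IsLagrangian.le_orthogonal {x W : Submodule R M} (hx : IsLagrangian B x) (hW : W ≤ x) :
    x ≤ B.orthogonal W :=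
  hx.ge.trans (LinearMap.BilinForm.orthogonal_le hW)

lemma IsLagrangian.eq_of_le {x x' : Submodule R M} (hx : IsLagrangian B x)
    (hx' : IsLagrangian B x') (h : x ≤ x') : x = x' :=
  le_antisymm h (hx ▸ hx'.le_orthogonal h)

variable {K V : Type*} [Field K] [AddCommGroup V] [Module K V] [FiniteDimensional K V]
  {B : LinearMap.BilinForm K V} {x y W : Submodule K V}

lemma isLagrangian_iff_finrank (hB : B.Nondegenerate) :
    IsLagrangian B x ↔ x ≤ B.orthogonal x ∧ finrank K V = 2 * finrank K x := by
  have := finrank_le x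
  have horth := LinearMap.BilinForm.finrank_orthogonal hB x
  refine ⟨fun hx => ⟨hx.ge, ?_⟩, fun h => (eq_of_le_of_finrank_eq h.1 ?_).symm⟩
  · rw [hx] at horth
    lia
  · lia

lemma IsLagrangian.lagrangianCompletion (hB : B.Nondegenerate) (hrefl : B.IsRefl)
    (hy : IsLagrangian B y) (hW : W ≤ B.orthogonal W) :
    IsLagrangian B (lagrangianCompletion B y W) := by
  rw [IsLagrangian, _root_.lagrangianCompletion, orthogonal_sup, hy.inf_orthogonal,
    LinearMap.BilinForm.orthogonal_orthogonal hB hrefl, ← hy.inf_orthogonal, inf_comm, sup_comm y,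
    sup_inf_assoc_of_le _ hW]

lemma IsLagrangian.finrank_eq (hB : B.Nondegenerate) (hx : IsLagrangian B x)
    (hy : IsLagrangian B y) : finrank K x = finrank K y := by
  have := ((isLagrangian_iff_finrank hB).1 hx).2
  have := ((isLagrangian_iff_finrank hB).1 hy).2
  lia

lemma IsLagrangian.finrank_inf_orthogonal_add (hB : B.Nondegenerate) (hy : IsLagrangian B y)
    (hWy : Disjoint W y) :
    finrank K ↥(y ⊓ B.orthogonal W) + finrank K W = finrank K y := by
  have hsum := finrank_sup_add_finrank_inf_eq y W
  have := finrank_le (y ⊔ W)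
  have := ((isLagrangian_iff_finrank hB).1 hy).2
  rw [hWy.symm.eq_bot, finrank_bot] at hsum
  rw [hy.inf_orthogonal, LinearMap.BilinForm.finrank_orthogonal hB]
  lia

lemma finrank_lagrangianCompletion_inf_add (hB : B.Nondegenerate) (hy : IsLagrangian B y)
    (hWy : Disjoint W y) :
    finrank K ↥(lagrangianCompletion B y W ⊓ y) + finrank K W = finrank K y := by
  rw [lagrangianCompletion, sup_comm, sup_inf_assoc_of_le _ inf_le_left, hWy.eq_bot, sup_bot_eq,
    hy.finrank_inf_orthogonal_add hB hWy]

lemma lagrangianCompletion_eq_iff (hB : B.Nondegenerate) (hrefl : B.IsRefl)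
    (hx : IsLagrangian B x) (hy : IsLagrangian B y) (hW : W ≤ B.orthogonal W)
    (hWy : Disjoint W y) (hdim : finrank K ↥(x ⊓ y) + finrank K W = finrank K y) :
    lagrangianCompletion B y W = x ↔ W ≤ x := by
  refine ⟨fun h => h ▸ le_sup_left, fun hWx => ?_⟩
  have hinf_le : x ⊓ y ≤ y ⊓ B.orthogonal W :=
    le_inf inf_le_right (inf_le_left.trans (hx.le_orthogonal hWx))
  have hinf : x ⊓ y = y ⊓ B.orthogonal W := by
    refine eq_of_le_of_finrank_eq hinf_le ?_
    have := hy.finrank_inf_orthogonal_add hB hWy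
    lia
  exact (hy.lagrangianCompletion hB hrefl hW).eq_of_le hx (sup_le hWx (hinf ▸ inf_le_left))

end Lagrangian

/-- A tuple whose vectors are pairwise orthogonal and linearly independent modulo `y`, hence a basis
of an isotropic subspace that meets `y` trivially (self-orthogonality `i = j` is included). -/
def IsIsotropicFrame {K V : Type*} [Field K] [AddCommGroup V] [Module K V]
    (B : LinearMap.BilinForm K V) (y : Submodule K V) {k : ℕ} (t : Fin k → V) : Prop :=
  LinearIndependent K (y.mkQ ∘ t) ∧ ∀ i j, B (t i) (t j) = 0

namespace IsIsotropicFrame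

variable {K V : Type*} [Field K] [AddCommGroup V] [Module K V]
  {B : LinearMap.BilinForm K V} {x y : Submodule K V} {k : ℕ}

lemma finSucc_iff (halt : B.IsAlt) {t : Fin (k + 1) → V} :
    IsIsotropicFrame B y t ↔ IsIsotropicFrame B y (Fin.tail t) ∧
      t 0 ∈ (B.orthogonal (span K (Set.range (Fin.tail t))) : Set V) \
        (y ⊔ span K (Set.range (Fin.tail t)) : Submodule K V) := by
  have horth : (∀ i j, B (t i) (t j) = 0) ↔
      (∀ i j, B (Fin.tail t i) (Fin.tail t j) = 0) ∧ ∀ i, B (Fin.tail t i) (t 0) = 0 := by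
    simp only [Fin.forall_fin_succ, Fin.tail, forall_and, halt.self_eq_zero,
      halt.eq_iff (x := t 0)]
    tauto
  rw [IsIsotropicFrame, IsIsotropicFrame, linearIndependent_mkQ_finSucc, horth,
    Set.mem_sdiff, SetLike.mem_coe, SetLike.mem_coe, mem_orthogonal_span_range]
  tauto

lemma disjoint_span {t : Fin k → V} (ht : IsIsotropicFrame B y t) :
    Disjoint (span K (Set.range t)) y :=
  disjoint_span_of_linearIndependent_mkQ ht.1

lemma finrank_span {t : Fin k → V} (ht : IsIsotropicFrame B y t) :
    finrank K (span K (Set.range t)) = k :=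
  finrank_span_of_linearIndependent_mkQ ht.1

lemma span_le_orthogonal {t : Fin k → V} (ht : IsIsotropicFrame B y t) :
    span K (Set.range t) ≤ B.orthogonal (span K (Set.range t)) :=
  span_range_le_orthogonal_self_iff.2 ht.2

variable [Finite K] [FiniteDimensional K V]

lemma card_eq_prod (hB : B.Nondegenerate) (halt : B.IsAlt) (hy : IsLagrangian B y) (k : ℕ) :
    Nat.card {t : Fin k → V // IsIsotropicFrame B y t} =
      ∏ i ∈ range k, (Nat.card K ^ (2 * finrank K y - i) - Nat.card K ^ finrank K y) := by
  have : Finite V := Module.finite_of_finite K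
  refine card_fin_tuples_eq_prod (P := fun _ t => IsIsotropicFrame B y t)
    (E := fun _ t => B.orthogonal (span K (Set.range t)) \
      (y ⊔ span K (Set.range t) : Submodule K V))
    (fun _ => ⟨linearIndependent_empty_type, fun i => i.elim0⟩)
    (fun _ _ => finSucc_iff halt) (fun k t ht => ?_) k
  have hinf := hy.finrank_inf_orthogonal_add hB ht.disjoint_span
  rw [ncard_diff_sup_span ht.1 ht.span_le_orthogonal, inf_comm,
    LinearMap.BilinForm.finrank_orthogonal hB, ((isLagrangian_iff_finrank hB).1 hy).2]
  rw [ht.finrank_span] at hinf ⊢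
  rw [hinf]

lemma card_mem_eq_prod (hB : B.Nondegenerate) (hx : IsLagrangian B x) (hy : IsLagrangian B y)
    (k : ℕ) :
    Nat.card {t : Fin k → V // IsIsotropicFrame B y t ∧ ∀ i, t i ∈ x} =
      ∏ i ∈ range k,
        (Nat.card K ^ finrank K y - Nat.card K ^ (finrank K ↥(x ⊓ y) + i)) := by
  rw [← hx.finrank_eq hB hy, ← card_linearIndependent_mkQ_mem]
  refine Nat.card_congr (Equiv.subtypeEquivRight fun t => ?_)
  rw [IsIsotropicFrame, and_assoc]
  refine and_congr_right fun _ => and_iff_right_of_imp fun htx i j => ?_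
  exact hx.ge (htx j) _ (htx i)

end IsIsotropicFrame

lemma prod_pow_sub_pow_add (q m k : ℕ) :
    ∏ i ∈ range k, (q ^ (m + k) - q ^ (m + i)) =
      q ^ (m * k + k.choose 2) * ∏ i ∈ range k, (q ^ (i + 1) - 1) := by
  have hfactor : ∀ i ∈ range k,
      q ^ (m + k) - q ^ (m + i) = q ^ m * q ^ i * (q ^ (k - 1 - i + 1) - 1) := by
    intro i hi
    rw [Nat.mul_sub_one, ← pow_add, ← pow_add]
    congr 2
    have := mem_range.1 hi
    lia
  rw [prod_congr rfl hfactor, prod_mul_distrib, prod_mul_distrib, prod_const, card_range,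
    prod_pow_eq_pow_sum, sum_range_id, ← Nat.choose_two_right, ← pow_mul, ← pow_add,
    prod_range_reflect fun i => q ^ (i + 1) - 1]

lemma prod_pow_two_mul_sub_sub_pow (q : ℕ) {n k : ℕ} (hk : k ≤ n) :
    ∏ i ∈ range k, (q ^ (2 * n - i) - q ^ n) =
      q ^ (n * k) * ∏ i ∈ range k, (q ^ (n - i) - 1) := by
  have hfactor : ∀ i ∈ range k, q ^ (2 * n - i) - q ^ n = q ^ n * (q ^ (n - i) - 1) := by
    intro i hi
    rw [Nat.mul_sub_one, ← pow_add]
    congr 2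
    have := mem_range.1 hi
    lia
  rw [prod_congr rfl hfactor, prod_mul_distrib, prod_const, card_range, pow_mul]

lemma choose_two_add_succ_choose_two (k : ℕ) : k.choose 2 + (k + 1).choose 2 = k * k := by
  induction k with
  | zero => rfl
  | succ k ih =>
    simp only [Nat.choose_succ_succ' _ 1, Nat.choose_one_right] at ih ⊢
    lia

section LagrangianCount

variable {K V : Type*} [Field K] [AddCommGroup V] [Module K V] [Finite K] [FiniteDimensional K V]
  {B : LinearMap.BilinForm K V} {y : Submodule K V} {m k : ℕ}

lemma card_isIsotropicFrame_eq_card_isLagrangian_mul (hB : B.Nondegenerate) (halt : B.IsAlt)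
    (hy : IsLagrangian B y) (hdim : finrank K y = m + k) :
    Nat.card {t : Fin k → V // IsIsotropicFrame B y t} =
      Nat.card {x // IsLagrangian B x ∧ finrank K ↥(x ⊓ y) = m} *
        ∏ i ∈ range k, (Nat.card K ^ (m + k) - Nat.card K ^ (m + i)) := by
  have : Finite V := Module.finite_of_finite K
  have := Fintype.ofFinite {x // IsLagrangian B x ∧ finrank K ↥(x ⊓ y) = m}
  let completion (t : {t : Fin k → V // IsIsotropicFrame B y t}) :
      {x // IsLagrangian B x ∧ finrank K ↥(x ⊓ y) = m} :=
    ⟨lagrangianCompletion B y (span K (Set.range t.1)),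
      hy.lagrangianCompletion hB halt.isRefl t.2.span_le_orthogonal, by
        have := finrank_lagrangianCompletion_inf_add hB hy t.2.disjoint_span
        rw [t.2.finrank_span] at this
        lia⟩
  have hfiber (x) : Nat.card {t // completion t = x} =
      ∏ i ∈ range k, (Nat.card K ^ (m + k) - Nat.card K ^ (m + i)) := by
    have hiff (t) : completion t = x ↔ ∀ i, t.1 i ∈ x.1 := by
      rw [Subtype.ext_iff, lagrangianCompletion_eq_iff hB halt.isRefl x.2.1 hy
        t.2.span_le_orthogonal t.2.disjoint_span (by rw [t.2.finrank_span, x.2.2, hdim]),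
        span_le, Set.range_subset_iff]
      rfl
    have hframes := IsIsotropicFrame.card_mem_eq_prod hB x.2.1 hy k
    rw [x.2.2, hdim] at hframes
    rw [← hframes]
    exact Nat.card_congr ((Equiv.subtypeEquivRight hiff).trans
      (Equiv.subtypeSubtypeEquivSubtypeInter _ fun t : Fin k → V => ∀ i, t i ∈ x.1))
  rw [← Nat.card_congr (Equiv.sigmaFiberEquiv completion), Nat.card_sigma,
    sum_congr rfl fun x _ => hfiber x, sum_const, card_univ, ← Nat.card_eq_fintype_card,
    smul_eq_mul]

lemma card_isLagrangian_mul_prod (hB : B.Nondegenerate) (halt : B.IsAlt)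
    (hy : IsLagrangian B y) (hdim : finrank K y = m + k) :
    Nat.card {x // IsLagrangian B x ∧ finrank K ↥(x ⊓ y) = m} *
        ∏ i ∈ range k, (Nat.card K ^ (i + 1) - 1) =
      Nat.card K ^ (k + 1).choose 2 * ∏ i ∈ range k, (Nat.card K ^ (m + k - i) - 1) := by
  have hcount := card_isIsotropicFrame_eq_card_isLagrangian_mul hB halt hy hdim
  have hexp : (m + k) * k = m * k + k.choose 2 + (k + 1).choose 2 := by
    rw [add_assoc, choose_two_add_succ_choose_two, add_mul]
  rw [IsIsotropicFrame.card_eq_prod hB halt hy, hdim,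
    prod_pow_two_mul_sub_sub_pow _ (Nat.le_add_left k m), prod_pow_sub_pow_add, hexp, pow_add,
    mul_assoc, mul_left_comm (Nat.card _)] at hcount
  exact (Nat.eq_of_mul_eq_mul_left (pow_pos Nat.card_pos _) hcount).symm

theorem count_half_distance_general (hB : B.Nondegenerate) (halt : B.IsAlt)
    (hy : IsLagrangian B y) (hdim : finrank K y = m + k) :
    (Nat.card {x // IsLagrangian B x ∧ finrank K ↥(x ⊓ y) = m} : ℚ) =
      (∏ i ∈ range k, ((Nat.card K : ℚ) ^ (m + k - i) - 1) / ((Nat.card K : ℚ) ^ (i + 1) - 1)) *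
        (Nat.card K : ℚ) ^ (k + 1).choose 2 := by
  have hone_le (j : ℕ) : 1 ≤ Nat.card K ^ j := Nat.one_le_pow _ _ Nat.card_pos
  have hne : ∏ i ∈ range k, ((Nat.card K : ℚ) ^ (i + 1) - 1) ≠ 0 :=
    prod_ne_zero_iff.2 fun i _ => sub_ne_zero.2
      (one_lt_pow₀ (mod_cast Finite.one_lt_card) i.succ_ne_zero).ne'
  have hcount := congrArg (Nat.cast (R := ℚ)) (card_isLagrangian_mul_prod hB halt hy hdim)
  push_cast [Nat.cast_sub (hone_le _)] at hcount
  rw [prod_div_distrib, div_mul_eq_mul_div, eq_div_iff hne, hcount, mul_comm]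

end LagrangianCount

section StandardSymplectic

/-- The symplectic product `symp` as a bilinear form on `F2^{2n}`. -/
def sympForm (n : ℕ) : LinearMap.BilinForm F2 (PV n) :=
  LinearMap.mk₂ F2 symp
    (fun a b c => by
      simp only [symp, Prod.fst_add, Prod.snd_add, Pi.add_apply, add_mul, sum_add_distrib]
      ring)
    (fun r a b => by simp [symp, mul_assoc, mul_sum, mul_add])
    (fun a b c => by
      simp only [symp, Prod.fst_add, Prod.snd_add, Pi.add_apply, mul_add, sum_add_distrib]
      ring)
    (fun r a b => by simp [symp, mul_left_comm, mul_sum, mul_add])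

variable {n : ℕ}

lemma sympForm_apply (a b : PV n) : sympForm n a b = symp a b := rfl

lemma sympForm_isAlt (n : ℕ) : (sympForm n).IsAlt := fun a => by
  simp only [sympForm_apply, symp, mul_comm (a.2 _), CharTwo.add_self_eq_zero]

lemma sympForm_nondegenerate (n : ℕ) : (sympForm n).Nondegenerate := by
  refine (sympForm_isAlt n).isRefl.nondegenerate_iff_separatingLeft.2 fun a ha => ?_
  ext i
  · simpa [sympForm_apply, symp, Pi.single_apply] using ha (0, Pi.single i 1)
  · simpa [sympForm_apply, symp, Pi.single_apply] using ha (Pi.single i 1, 0)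

lemma isIsotropic_iff_le_orthogonal {S : Submodule F2 (PV n)} :
    IsIsotropic S ↔ S ≤ (sympForm n).orthogonal S :=
  ⟨fun h y hy x hx => h x hx y hy, fun h x hx _ hy => h hy x hx⟩

lemma mem_Lset_self_iff_isLagrangian {x : Submodule F2 (PV n)} :
    x ∈ Lset n n ↔ IsLagrangian (sympForm n) x := by
  have hfinrank : finrank F2 (PV n) = 2 * n := by simp [two_mul]
  rw [isLagrangian_iff_finrank (sympForm_nondegenerate n), hfinrank,
    ← isIsotropic_iff_le_orthogonal, mul_right_inj' two_ne_zero, eq_comm (a := n)]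
  rfl

end StandardSymplectic

/-- For even `n ≥ 2` and `y` a maximal isotropic subspace of `F2^{2n}`, the number of
maximal isotropic subspaces `x` with `dim(x ∩ y) = n/2` equals
`binom(n, n/2)_2 · 2^{C(n/2+1, 2)}`. -/
theorem count_half_distance :
    ∀ n : ℕ, Even n → 2 ≤ n → ∀ y ∈ Lset n n,
      (Nat.card {x : Submodule F2 (PV n) |
          x ∈ Lset n n ∧ Module.finrank F2 ↥(x ⊓ y) = n / 2} : ℚ) =
        gaussBinom n (n / 2) * 2 ^ (Nat.choose (n / 2 + 1) 2) := by
  rintro n ⟨k, rfl⟩ - y hy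
  have hhalf : (k + k) / 2 = k := by lia
  simpa only [mem_Lset_self_iff_isLagrangian, gaussBinom, hhalf, Nat.card_zmod, Nat.cast_ofNat]
    using! count_half_distance_general (sympForm_nondegenerate _) (sympForm_isAlt _)
      (mem_Lset_self_iff_isLagrangian.1 hy) hy.2
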